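/- arXiv:1908.01223 — 2 statements merged into one kernel-verified Lean document; each statement's English description precedes it below -/
import Mathlib

section
/- Let G be a P4-sparse graph and let A be a set of four vertices inducing a P4 in G. Then there do not exist a vertex v in P(A) and distinct vertices x, y in I(A) such that v is adjacent to both x and y. -/
open SimpleGraph

variable {V : Type*}

/-- `a, b, c, d` form an induced path on four vertices (a `P4`) in `G`. -/
def IsP4 (G : SimpleGraph V) (a b c d : V) : Prop :=
  a ≠ b ∧ a ≠ c ∧ a ≠ d ∧ b ≠ c ∧ b ≠ d ∧ c ≠ d ∧
    G.Adj a b ∧ G.Adj b c ∧ G.Adj c d ∧ ¬G.Adj a c ∧ ¬G.Adj a d ∧ ¬G.Adj b d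

/-- A graph is a cograph if it contains no induced `P4`. -/
def IsCograph (G : SimpleGraph V) : Prop :=
  ∀ a b c d : V, ¬IsP4 G a b c d

/-- The vertex set `A` induces a `P4` in `G`. -/
def InducesP4 (G : SimpleGraph V) (A : Set V) : Prop :=
  ∃ a b c d : V, IsP4 G a b c d ∧ A = {a, b, c, d}

/-- `G` is `P4`-sparse: every set of five vertices induces at most one `P4`. -/
def P4Sparse (G : SimpleGraph V) : Prop :=
  ∀ s : Set V, s.ncard = 5 →
    ∀ A B : Set V, A ⊆ s → B ⊆ s → InducesP4 G A → InducesP4 G B → A = B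

/-- `F` is a deletion set of `G`: a set of edges of `G` whose removal yields a cograph. -/
def IsDeletionSet (G : SimpleGraph V) (F : Set (Sym2 V)) : Prop :=
  F ⊆ G.edgeSet ∧ IsCograph (G.deleteEdges F)

/-- The minimum size of a deletion set of `G`. -/
noncomputable def cographAlpha (G : SimpleGraph V) : ℕ :=
  sInf {n | ∃ F : Set (Sym2 V), IsDeletionSet G F ∧ F.ncard = n}

/-- `T(A)`: the vertices outside `A` adjacent to all vertices of `A`. -/
def tSet (G : SimpleGraph V) (A : Set V) : Set V :=
  {v | v ∉ A ∧ ∀ a ∈ A, G.Adj v a}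

/-- `I(A)`: the vertices outside `A` adjacent to no vertex of `A`. -/
def iSet (G : SimpleGraph V) (A : Set V) : Set V :=
  {v | v ∉ A ∧ ∀ a ∈ A, ¬G.Adj v a}

/-- `P(A)`: the vertices `v` outside `A` with `1 ≤ |N(v) ∩ A| ≤ 3`. -/
def pSet (G : SimpleGraph V) (A : Set V) : Set V :=
  {v | v ∉ A ∧ 1 ≤ (G.neighborSet v ∩ A).ncard ∧ (G.neighborSet v ∩ A).ncard ≤ 3}

/-- In a `P4`-sparse graph, an induced `P4` and a fifth vertex `e` span no induced `P4`
through `e`. -/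
lemma P4Sparse.notMem_of_isP4 {G : SimpleGraph V} (hG : P4Sparse G) {a b c d e p q r s : V}
    (h : IsP4 G a b c d) (he : e ∉ ({a, b, c, d} : Set V)) (h' : IsP4 G p q r s)
    (hsub : ({p, q, r, s} : Set V) ⊆ {e, a, b, c, d}) : e ∉ ({p, q, r, s} : Set V) := by
  intro hmem
  have hcard : ({e, a, b, c, d} : Set V).ncard = 5 := by
    obtain ⟨hab, hac, had, hbc, hbd, hcd, -⟩ := h
    rw [Set.ncard_insert_of_notMem he, Set.ncard_insert_of_notMem (by simp [*]),
      Set.ncard_insert_of_notMem (by simp [*]), Set.ncard_pair hcd]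
  have heq := hG _ hcard _ _ (Set.subset_insert _ _) hsub ⟨a, b, c, d, h, rfl⟩
    ⟨p, q, r, s, h', rfl⟩
  exact he (heq ▸ hmem)

/-- In a `P4`-sparse graph, a vertex with a neighbour and a non-neighbour on an induced `P4`
is adjacent to exactly its two midpoints. -/
lemma P4Sparse.adj_midpoints {G : SimpleGraph V} (hG : P4Sparse G) {a b c d v : V}
    (h : IsP4 G a b c d) (hv : v ∉ ({a, b, c, d} : Set V))
    (hadj : G.Adj v a ∨ G.Adj v b ∨ G.Adj v c ∨ G.Adj v d)
    (hnadj : ¬(G.Adj v a ∧ G.Adj v b ∧ G.Adj v c ∧ G.Adj v d)) :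
    ¬G.Adj v a ∧ G.Adj v b ∧ G.Adj v c ∧ ¬G.Adj v d := by
  have key : ∀ p q r s : V, ({p, q, r, s} : Set V) ⊆ {v, a, b, c, d} →
      v ∈ ({p, q, r, s} : Set V) → ¬IsP4 G p q r s :=
    fun p q r s hsub hmem h' => hG.notMem_of_isP4 h hv h' hsub hmem
  have h₁ := key v b c d (by grind) (by simp)
  have h₂ := key a b c v (by grind) (by simp)
  have h₃ := key v a b c (by grind) (by simp)
  have h₄ := key b c d v (by grind) (by simp)
  have h₅ := key a v c d (by grind) (by simp)
  have h₆ := key a b v d (by grind) (by simp)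
  have h₇ := key a v d c (by grind) (by simp)
  have h₈ := key b a v d (by grind) (by simp)
  simp only [Set.mem_insert_iff, Set.mem_singleton_iff, not_or] at hv
  unfold IsP4 at *
  grind [G.adj_comm v a, G.adj_comm v b, G.adj_comm v c, G.adj_comm v d, G.adj_comm a b,
    G.adj_comm c d]

/-- **Observation 2.6, complement form.** If `G` is `P4`-sparse and `A`
induces a `P4`, then there are no `v ∈ P(A)` and distinct `x, y ∈ I(A)` such that `v` is
adjacent to both `x` and `y`. -/
theorem p4Sparse_obs_2_6_compl (G : SimpleGraph V) (hG : P4Sparse G)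
    (a b c d : V) (hP4 : IsP4 G a b c d) (A : Set V) (hA : A = {a, b, c, d}) :
    ¬∃ v x y : V, x ≠ y ∧ v ∈ pSet G A ∧ x ∈ iSet G A ∧ y ∈ iSet G A ∧
      G.Adj v x ∧ G.Adj v y := by
  rintro ⟨v, x, y, hxy, ⟨hvA, hpos, hle⟩, ⟨hxA, hx⟩, ⟨hyA, hy⟩, hvx, hvy⟩
  subst hA
  have hadj : G.Adj v a ∨ G.Adj v b ∨ G.Adj v c ∨ G.Adj v d := by
    obtain ⟨w, hvw, hw⟩ := Set.nonempty_of_ncard_ne_zero (by omega :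
      (G.neighborSet v ∩ {a, b, c, d}).ncard ≠ 0)
    rw [mem_neighborSet] at hvw
    rcases hw with rfl | rfl | rfl | rfl <;> tauto
  have hnadj : ¬(G.Adj v a ∧ G.Adj v b ∧ G.Adj v c ∧ G.Adj v d) := by
    intro hall
    obtain ⟨hab, hac, had, hbc, hbd, hcd, -⟩ := hP4
    have hsub : ({a, b, c, d} : Set V) ⊆ G.neighborSet v := by
      rintro w (rfl | rfl | rfl | rfl) <;> simp [hall]
    rw [Set.inter_eq_right.mpr hsub, Set.ncard_insert_of_notMem (by simp [*]),
      Set.ncard_insert_of_notMem (by simp [*]), Set.ncard_pair hcd] at hle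
    omega
  obtain ⟨hva, hvb, -, -⟩ := hG.adj_midpoints hP4 hvA hadj hnadj
  have hpath : ∀ z, z ∉ ({a, b, c, d} : Set V) → (∀ w ∈ ({a, b, c, d} : Set V), ¬G.Adj z w) →
      G.Adj v z → IsP4 G a b v z := by
    intro z hzA hz hvz
    have hza := hz a (by simp)
    have hzb := hz b (by simp)
    simp only [Set.mem_insert_iff, Set.mem_singleton_iff, not_or] at hvA hzA
    exact ⟨hP4.1, Ne.symm hvA.1, Ne.symm hzA.1, Ne.symm hvA.2.1, Ne.symm hzA.2.1, hvz.ne,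
      hP4.2.2.2.2.2.2.1, hvb.symm, hvz, fun h => hva h.symm, fun h => hza h.symm,
      fun h => hzb h.symm⟩
  have hyx : y ∉ ({a, b, v, x} : Set V) := by
    have := hvy.ne
    grind
  exact hG.notMem_of_isP4 (hpath x hxA hx hvx) hyx (hpath y hyA hy hvy) (by grind) (by simp)
end

section
/- Let G be a P4-sparse graph and let A be a set of four vertices inducing a P4 in G. Then there do not exist distinct vertices u, v in P(A) and a vertex x in T(A) such that x is adjacent to neither u nor v. -/
open SimpleGraph

variable {V : Type*}

lemma IsP4.ncard_eq_four {G : SimpleGraph V} {a b c d : V} (h : IsP4 G a b c d) :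
    ({a, b, c, d} : Set V).ncard = 4 := by
  obtain ⟨hab, hac, had, hbc, hbd, hcd, -⟩ := h
  rw [Set.ncard_insert_of_notMem (by simp [hab, hac, had]) (Set.toFinite _),
    Set.ncard_insert_of_notMem (by simp [hbc, hbd]) (Set.toFinite _), Set.ncard_pair hcd]

/-- In a `P4`-sparse graph, no induced `P4` consists of a vertex `u` outside a given
induced `P4` together with vertices of that `P4`. -/
lemma P4Sparse.not_isP4_of_subset {G : SimpleGraph V} (hG : P4Sparse G) {a b c d u p q r s : V}
    (h : IsP4 G a b c d) (hu : u ∉ ({a, b, c, d} : Set V)) (h' : IsP4 G p q r s)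
    (hsub : ({p, q, r, s} : Set V) ⊆ {u, a, b, c, d}) (hmem : u ∈ ({p, q, r, s} : Set V)) :
    False := by
  have hcard' : ({u, a, b, c, d} : Set V).ncard = 5 := by
    rw [Set.ncard_insert_of_notMem hu (Set.toFinite _), h.ncard_eq_four]
  have heq := hG _ hcard' _ _ (Set.subset_insert u _) hsub ⟨a, b, c, d, h, rfl⟩
    ⟨p, q, r, s, h', rfl⟩
  exact hu (heq ▸ hmem)

/-- A vertex of `P(A)` is adjacent to some, but not to all, of the vertices of `A`. -/
lemma exists_adj_and_exists_not_adj_of_mem_pSet {G : SimpleGraph V} {a b c d u : V}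
    (h : IsP4 G a b c d) (hu : u ∈ pSet G {a, b, c, d}) :
    (G.Adj u a ∨ G.Adj u b ∨ G.Adj u c ∨ G.Adj u d) ∧
      ¬(G.Adj u a ∧ G.Adj u b ∧ G.Adj u c ∧ G.Adj u d) := by
  obtain ⟨-, hpos, hle⟩ := hu
  constructor
  · obtain ⟨w, hw, hwA⟩ := Set.nonempty_of_ncard_ne_zero (by omega :
      (G.neighborSet u ∩ {a, b, c, d}).ncard ≠ 0)
    rw [mem_neighborSet] at hw
    rcases hwA with rfl | rfl | rfl | rfl <;> simp [hw]
  · rintro ⟨ha, hb, hc, hd⟩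
    have hsub : ({a, b, c, d} : Set V) ⊆ G.neighborSet u := by
      rintro w (rfl | rfl | rfl | rfl) <;> assumption
    rw [Set.inter_eq_right.mpr hsub, h.ncard_eq_four] at hle
    omega

/-- In a `P4`-sparse graph, a vertex of `P(A)` is adjacent precisely to the two midpoints of the
path induced by `A`. -/
lemma P4Sparse.adj_midpoints_of_mem_pSet {G : SimpleGraph V} (hG : P4Sparse G) {a b c d u : V}
    (h : IsP4 G a b c d) (hu : u ∈ pSet G {a, b, c, d}) :
    ¬G.Adj u a ∧ G.Adj u b ∧ G.Adj u c ∧ ¬G.Adj u d := by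
  have hno : ∀ p q r s : V, ({p, q, r, s} : Set V) ⊆ {u, a, b, c, d} →
      u ∈ ({p, q, r, s} : Set V) → ¬IsP4 G p q r s := fun p q r s hsub hmem h' =>
    hG.not_isP4_of_subset h hu.1 h' hsub hmem
  obtain ⟨hsome, hnot⟩ := exists_adj_and_exists_not_adj_of_mem_pSet h hu
  have hne := hu.1
  have h_uabc := hno u a b c (by grind) (by simp)
  have h_ubcd := hno u b c d (by grind) (by simp)
  have h_abcu := hno a b c u (by grind) (by simp)
  have h_udcb := hno u d c b (by grind) (by simp)
  have h_aucd := hno a u c d (by grind) (by simp)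
  have h_abud := hno a b u d (by grind) (by simp)
  have h_audc := hno a u d c (by grind) (by simp)
  have h_baud := hno b a u d (by grind) (by simp)
  simp only [Set.mem_insert_iff, Set.mem_singleton_iff, not_or] at hne
  simp only [IsP4] at *
  grind [G.adj_comm]

/-- **Observation 2.7.** If `G` is `P4`-sparse and `A` induces a `P4`, then
there are no distinct `u, v ∈ P(A)` and `x ∈ T(A)` such that `x` is adjacent to neither `u`
nor `v`. -/
theorem p4Sparse_obs_2_7 (G : SimpleGraph V) (hG : P4Sparse G)
    (a b c d : V) (hP4 : IsP4 G a b c d) (A : Set V) (hA : A = {a, b, c, d}) :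
    ¬∃ u v x : V, u ≠ v ∧ u ∈ pSet G A ∧ v ∈ pSet G A ∧ x ∈ tSet G A ∧
      ¬G.Adj x u ∧ ¬G.Adj x v := by
  subst hA
  rintro ⟨u, v, x, huv, hu, hv, ⟨-, hx⟩, hxu, hxv⟩
  have hxa : G.Adj x a := hx a (by simp)
  have hxc : G.Adj x c := hx c (by simp)
  have hpath : ∀ w ∈ pSet G {a, b, c, d}, ¬G.Adj x w → IsP4 G a x c w := by
    intro w hw hxw
    obtain ⟨hwa, -, hwc, -⟩ := hG.adj_midpoints_of_mem_pSet hP4 hw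
    obtain ⟨-, hac, -, -, -, -, -, -, -, hac', -⟩ := hP4
    refine ⟨hxa.ne', hac, ?_, hxc.ne, ?_, hwc.ne', hxa.symm, hxc, hwc.symm, hac',
      fun h => hwa h.symm, hxw⟩
    · rintro rfl
      exact hw.1 (by simp)
    · rintro rfl
      exact hwa hxa
  have hpu := hpath u hu hxu
  have hpv := hpath v hv hxv
  refine hG.not_isP4_of_subset (u := v) hpu ?_ hpv (by grind) (by simp)
  obtain ⟨-, -, hav, -, hxv', hcv, -⟩ := hpv
  simp [hav.symm, hxv'.symm, hcv.symm, huv.symm]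
end
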